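/- Let X be the smooth extremal surface in ℙ³(k) of degree q+1 cut out by a full-rank Frobenius form whose matrix A is Hermitian, i.e. (A^{[q]})ᵀ = A (so that every entry of A lies in F_{q²}). Then a point of X is a star point of X if and only if it is an F_{q²}-point, i.e. it admits a homogeneous coordinate representative all of whose coordinates lie in F_{q²}. -/

import Mathlib

open Module

/-! Basic setup: `k` is an algebraically closed field of characteristic `p > 0`,
`q = p^e`.  We model ℙ³(k) via linear subspaces of `k⁴ = Fin 4 → k`:
points, lines and planes of ℙ³(k) are subspaces of dimension 1, 2 and 3
respectively.  A hypersurface cut out by a homogeneous form is recorded by its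
affine cone in `k⁴`. -/

/-- The Frobenius form in 4 variables determined by a 4×4 matrix `A`:
`∑ i j, A i j * x i ^ q * x j`, a homogeneous form of degree `q+1`. -/
def frobForm {k : Type*} [Field k] (q : ℕ) (A : Matrix (Fin 4) (Fin 4) k)
    (x : Fin 4 → k) : k :=
  ∑ i, ∑ j, A i j * x i ^ q * x j

/-- The affine cone in `k⁴` of the extremal surface in ℙ³(k) cut out by the
Frobenius form with matrix `A`; a point of ℙ³(k) lies on the surface iff its
homogeneous coordinate representatives lie in this set. -/
def extremalCone (k : Type*) [Field k] (q : ℕ) (A : Matrix (Fin 4) (Fin 4) k) :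
    Set (Fin 4 → k) :=
  {x | frobForm q A x = 0}

/-- A point of ℙ³(k): a 1-dimensional subspace of `k⁴`. -/
def IsPoint {k : Type*} [Field k] (c : Submodule k (Fin 4 → k)) : Prop :=
  finrank k c = 1

/-- A line of ℙ³(k): a 2-dimensional subspace of `k⁴`. -/
def IsLine {k : Type*} [Field k] (L : Submodule k (Fin 4 → k)) : Prop :=
  finrank k L = 2

/-- A plane of ℙ³(k): a 3-dimensional subspace of `k⁴`. -/
def IsPlane {k : Type*} [Field k] (H : Submodule k (Fin 4 → k)) : Prop :=
  finrank k H = 3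

/-- `L` is a line lying on the surface with affine cone `X`. -/
def IsLineOn {k : Type*} [Field k] (X : Set (Fin 4 → k))
    (L : Submodule k (Fin 4 → k)) : Prop :=
  IsLine L ∧ (L : Set (Fin 4 → k)) ⊆ X

/-- Two lines of ℙ³(k) meet iff the corresponding subspaces of `k⁴` intersect
nontrivially. -/
def MeetsLine {k : Type*} [Field k] (L M : Submodule k (Fin 4 → k)) : Prop :=
  L ⊓ M ≠ ⊥

/-- Two lines of ℙ³(k) are skew iff the corresponding subspaces of `k⁴`
intersect trivially. -/
def SkewLine {k : Type*} [Field k] (L M : Submodule k (Fin 4 → k)) : Prop :=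
  L ⊓ M = ⊥

/-- `IsStarAt q X S c`: `S` is a star on the surface with affine cone `X`,
centered at the point `c`, i.e. a set of `q+1` distinct lines on the surface
all passing through `c`. -/
def IsStarAt {k : Type*} [Field k] (q : ℕ) (X : Set (Fin 4 → k))
    (S : Set (Submodule k (Fin 4 → k))) (c : Submodule k (Fin 4 → k)) : Prop :=
  IsPoint c ∧ S.ncard = q + 1 ∧ ∀ L ∈ S, IsLineOn X L ∧ c ≤ L

/-- `S` is a star on the surface with affine cone `X`. -/
def IsStar {k : Type*} [Field k] (q : ℕ) (X : Set (Fin 4 → k))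
    (S : Set (Submodule k (Fin 4 → k))) : Prop :=
  ∃ c, IsStarAt q X S c

/-- `c` is a star point of the surface with affine cone `X`. -/
def IsStarPoint {k : Type*} [Field k] (q : ℕ) (X : Set (Fin 4 → k))
    (c : Submodule k (Fin 4 → k)) : Prop :=
  ∃ S, IsStarAt q X S c

/-- `H` is a star plane of the surface with affine cone `X`, centered at `c`:
the plane section `X ∩ H` is the union of a star centered at `c`. -/
def IsStarPlaneAt {k : Type*} [Field k] (q : ℕ) (X : Set (Fin 4 → k))
    (H c : Submodule k (Fin 4 → k)) : Prop :=
  IsPlane H ∧ ∃ S, IsStarAt q X S c ∧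
    X ∩ (H : Set (Fin 4 → k)) = ⋃ L ∈ S, (L : Set (Fin 4 → k))

/-- An element of `Aut(X)`: since every projective linear automorphism of
ℙ³(k) is represented by an invertible linear map of `k⁴` (uniquely up to
scalars, which act trivially on subspaces and preserve every cone), `g ∈
PGL(4,k)` with `g(X) = X` corresponds to a linear automorphism of `k⁴`
mapping the affine cone `X` onto itself. -/
def PreservesCone {k : Type*} [Field k] (X : Set (Fin 4 → k))
    (g : (Fin 4 → k) ≃ₗ[k] (Fin 4 → k)) : Prop :=
  (⇑g) '' X = X

section Helpers

open Polynomial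

variable {k : Type*} [Field k]

/-- The sesquilinear form attached to `A`, linear in the second variable. -/
def sesq (q : ℕ) (A : Matrix (Fin 4) (Fin 4) k) (x : Fin 4 → k) : (Fin 4 → k) →ₗ[k] k where
  toFun y := ∑ i, ∑ j, A i j * x i ^ q * y j
  map_add' y z := by
    simp only [Pi.add_apply, mul_add, Finset.sum_add_distrib]
  map_smul' a y := by
    simp only [Pi.smul_apply, smul_eq_mul, Finset.mul_sum, RingHom.id_apply]
    refine Finset.sum_congr rfl fun i _ => Finset.sum_congr rfl fun j _ => ?_
    ring

theorem sesq_apply (q : ℕ) (A : Matrix (Fin 4) (Fin 4) k) (x y : Fin 4 → k) :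
    sesq q A x y = ∑ i, ∑ j, A i j * x i ^ q * y j := rfl

theorem sesq_self (q : ℕ) (A : Matrix (Fin 4) (Fin 4) k) (x : Fin 4 → k) :
    sesq q A x x = frobForm q A x := rfl

theorem sesq_add {q : ℕ} (hadd : ∀ a b : k, (a + b) ^ q = a ^ q + b ^ q)
    (A : Matrix (Fin 4) (Fin 4) k) (x y : Fin 4 → k) :
    sesq q A (x + y) = sesq q A x + sesq q A y := by
  refine LinearMap.ext fun z => ?_
  simp only [LinearMap.add_apply, sesq_apply, Pi.add_apply, hadd, mul_add,
    add_mul, Finset.sum_add_distrib]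

theorem sesq_smul (q : ℕ) (A : Matrix (Fin 4) (Fin 4) k) (a : k) (x : Fin 4 → k) :
    sesq q A (a • x) = a ^ q • sesq q A x := by
  refine LinearMap.ext fun y => ?_
  simp only [LinearMap.smul_apply, sesq_apply, Pi.smul_apply, smul_eq_mul, Finset.mul_sum, mul_pow]
  refine Finset.sum_congr rfl fun i _ => Finset.sum_congr rfl fun j _ => ?_
  ring

theorem sesq_zero {q : ℕ} (hq : q ≠ 0) (A : Matrix (Fin 4) (Fin 4) k) :
    sesq q A 0 = 0 := by
  refine LinearMap.ext fun y => ?_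
  simp [sesq_apply, hq]

theorem sesq_sum {q : ℕ} (hq : q ≠ 0) (hadd : ∀ a b : k, (a + b) ^ q = a ^ q + b ^ q)
    (A : Matrix (Fin 4) (Fin 4) k) {n : ℕ} (x : Fin n → Fin 4 → k) :
    sesq q A (∑ i, x i) = ∑ i, sesq q A (x i) := by
  let f : (Fin 4 → k) →+ ((Fin 4 → k) →ₗ[k] k) :=
    { toFun := sesq q A, map_zero' := sesq_zero hq A, map_add' := sesq_add hadd A }
  exact map_sum f x Finset.univ

theorem sesq_inj {q : ℕ} (hq : q ≠ 0) {A : Matrix (Fin 4) (Fin 4) k} (hA : IsUnit A)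
    {x : Fin 4 → k} (h : sesq q A x = 0) : x = 0 := by
  have h1 : Matrix.vecMul (fun i => x i ^ q) A = 0 := by
    funext j
    have := congrArg (fun f => f (Pi.single j 1)) h
    simp only [sesq_apply, Pi.single_apply, mul_ite, mul_one, mul_zero, Finset.sum_ite_eq',
      Finset.mem_univ, if_true, LinearMap.zero_apply] at this
    simp only [Matrix.vecMul, dotProduct, Pi.zero_apply]
    rw [← this]
    exact Finset.sum_congr rfl fun i _ => mul_comm _ _
  have h2 := Matrix.vecMul_injective_of_isUnit hA (h1.trans (Matrix.zero_vecMul A).symm)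
  funext i
  have := congrFun h2 i
  simpa [hq] using this

theorem sesq_herm {q : ℕ} (hq : q ≠ 0) (hadd : ∀ a b : k, (a + b) ^ q = a ^ q + b ^ q)
    {A : Matrix (Fin 4) (Fin 4) k} (hHerm : Matrix.transpose (A.map fun a => a ^ q) = A)
    (x y : Fin 4 → k) : sesq q A x y ^ q = sesq q A y (fun i => x i ^ q ^ 2) := by
  have hA : ∀ i j, A i j ^ q = A j i := fun i j => congrFun (congrFun hHerm j) i
  let f : k →+ k :=
    { toFun := fun a => a ^ q, map_zero' := by simp [hq], map_add' := hadd }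
  have hf : ∀ a, f a = a ^ q := fun _ => rfl
  rw [← hf, sesq_apply, sesq_apply, map_sum]
  simp_rw [map_sum]
  rw [Finset.sum_comm]
  refine Finset.sum_congr rfl fun i _ => Finset.sum_congr rfl fun j _ => ?_
  rw [hf, mul_pow, mul_pow, hA]
  ring

/-- Mutually orthogonal independent families have total size at most four. -/
theorem orth_card [IsAlgClosed k] {q : ℕ} (hq : q ≠ 0)
    (hadd : ∀ a b : k, (a + b) ^ q = a ^ q + b ^ q)
    {A : Matrix (Fin 4) (Fin 4) k} (hA : IsUnit A) {n m : ℕ}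
    {x : Fin n → Fin 4 → k} {y : Fin m → Fin 4 → k}
    (hx : LinearIndependent k x) (hy : LinearIndependent k y)
    (h : ∀ i j, sesq q A (x i) (y j) = 0) : n + m ≤ 4 := by
  have hfx : LinearIndependent k (fun i => (sesq q A (x i) : Module.Dual k (Fin 4 → k))) := by
    rw [Fintype.linearIndependent_iff] at hx ⊢
    intro g hg i
    choose r hr using fun i => IsAlgClosed.exists_pow_nat_eq (g i) (Nat.pos_of_ne_zero hq)
    have : sesq q A (∑ i, r i • x i) = 0 := by
      rw [sesq_sum hq hadd]
      simp only [sesq_smul, hr]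
      exact hg
    have h2 := hx r (sesq_inj hq hA this) i
    rw [← hr, h2, zero_pow hq]
  have h1 := finrank_span_eq_card hfx
  have h2 := finrank_span_eq_card hy
  have h3 := Subspace.finrank_add_finrank_dualAnnihilator_eq (Submodule.span k (Set.range y))
  have h4 : Submodule.span k (Set.range (fun i => (sesq q A (x i) : Module.Dual k (Fin 4 → k)))) ≤
      (Submodule.span k (Set.range y)).dualAnnihilator := by
    rw [Submodule.span_le]
    rintro _ ⟨i, rfl⟩
    rw [SetLike.mem_coe, Submodule.mem_dualAnnihilator]
    intro w hw
    have : Submodule.span k (Set.range y) ≤ LinearMap.ker (sesq q A (x i)) := by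
      rw [Submodule.span_le]
      rintro _ ⟨j, rfl⟩
      exact h i j
    exact this hw
  have h5 := Submodule.finrank_mono h4
  rw [Fintype.card_fin] at h1 h2
  have h6 := h1.symm.le.trans h5
  rw [h2] at h3
  rw [Module.finrank_fin_fun] at h3
  rw [add_comm, ← h3]
  exact Nat.add_le_add_left h6 m

theorem exists_pow_ne [IsAlgClosed k] {q : ℕ} (hq : 2 ≤ q) : ∃ t : k, t ^ q ≠ t := by
  by_contra! hcon
  have hne : (X ^ q - X : k[X]) ≠ 0 := by
    intro h
    have := congrArg (fun f => coeff f q) h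
    simp [coeff_X, show (1 : ℕ) ≠ q by omega] at this
  have : Infinite k := IsAlgClosed.instInfinite
  exact hne (Polynomial.funext fun t => by simp [hcon t])

/-- Polarization. -/
theorem sesq_polar [IsAlgClosed k] {q : ℕ} (hq : 2 ≤ q)
    (hadd : ∀ a b : k, (a + b) ^ q = a ^ q + b ^ q)
    {A : Matrix (Fin 4) (Fin 4) k} {L : Submodule k (Fin 4 → k)}
    (hL : ∀ x ∈ L, sesq q A x x = 0) {x y : Fin 4 → k} (hx : x ∈ L) (hy : y ∈ L) :
    sesq q A x y = 0 := by
  have key : ∀ t : k, t * sesq q A x y + t ^ q * sesq q A y x = 0 := by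
    intro t
    have := hL _ (L.add_mem hx (L.smul_mem t hy))
    rw [sesq_add hadd, sesq_smul] at this
    simpa [hL x hx, hL y hy] using this
  obtain ⟨t, ht⟩ := exists_pow_ne (k := k) hq
  have h1 := key 1
  have h2 := key t
  simp only [one_pow, one_mul] at h1
  have h3 : (t - t ^ q) * sesq q A x y = 0 := by linear_combination h2 - t ^ q * h1
  rcases mul_eq_zero.1 h3 with h | h
  · exact absurd (sub_eq_zero.1 h).symm ht
  · exact h

/-- The restriction of the form to an affine line has the maximal number of roots when there is
no multiple root. -/
theorem roots_ncard [IsAlgClosed k] {q : ℕ} (hq : 2 ≤ q) (hq0 : (q : k) = 0) (a b c d : k)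
    (hd : d ≠ 0) (hs : ∀ t : k, a + t * b + t ^ q * c + t ^ (q + 1) * d = 0 → b + t ^ q * d ≠ 0) :
    {t : k | a + t * b + t ^ q * c + t ^ (q + 1) * d = 0}.ncard = q + 1 := by
  classical
  set g : k[X] := C d * X ^ (q + 1) + C c * X ^ q + C b * X + C a with hg
  have hev : ∀ t, g.eval t = a + t * b + t ^ q * c + t ^ (q + 1) * d := by
    intro t; simp [hg]; ring
  have hder : ∀ t, (derivative g).eval t = b + t ^ q * d := by
    intro t
    rw [hg]
    simp [derivative_X_pow, hq0]
    ring
  have hdeg : g.natDegree = q + 1 := by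
    rw [hg]; compute_degree <;> first | omega | simpa using hd | skip
    all_goals simp [hd, show q ≠ 0 by omega]
  have hsep : g.Separable := by
    rw [Polynomial.Separable, Polynomial.isCoprime_iff_aeval_ne_zero_of_isAlgClosed k k]
    intro t
    simp only [coe_aeval_eq_eval]
    rw [hev, hder]
    by_cases h : a + t * b + t ^ q * c + t ^ (q + 1) * d = 0
    · exact Or.inr (hs t h)
    · exact Or.inl h
  have hg0 : g ≠ 0 := by rintro h; rw [h] at hdeg; simp at hdeg
  have hset : {t : k | a + t * b + t ^ q * c + t ^ (q + 1) * d = 0} = (g.roots.toFinset : Set k) := by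
    ext t
    simp [hg0, IsRoot.def, hev]
  rw [hset, Set.ncard_coe_finset, Multiset.toFinset_card_of_nodup (nodup_roots hsep),
    ← (IsAlgClosed.splits g).natDegree_eq_card_roots, hdeg]

theorem linInd_three {x y z : Fin 4 → k} (hyz : LinearIndependent k ![y, z])
    (hx : x ∉ Submodule.span k {y, z}) : LinearIndependent k ![x, y, z] := by
  have : ![x, y, z] = Fin.cons x ![y, z] := rfl
  rw [this, linearIndependent_finCons]
  refine ⟨hyz, ?_⟩
  simpa [Set.pair_comm] using hx

theorem linInd_two {y z : Fin 4 → k} (hz : z ≠ 0)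
    (hy : ∀ a : k, a • z ≠ y) : LinearIndependent k ![y, z] := by
  rw [LinearIndependent.pair_symm_iff]
  exact (LinearIndependent.pair_iff' hz).2 hy

theorem star_to_rational [IsAlgClosed k] {q : ℕ} (hq : 2 ≤ q)
    (hadd : ∀ a b : k, (a + b) ^ q = a ^ q + b ^ q)
    {A : Matrix (Fin 4) (Fin 4) k} (hA : IsUnit A)
    (hHerm : Matrix.transpose (A.map fun a => a ^ q) = A)
    {v : Fin 4 → k} (hv : v ≠ 0) {L M : Submodule k (Fin 4 → k)} (hLM : L ≠ M)
    (hL : IsLineOn (extremalCone k q A) L) (hM : IsLineOn (extremalCone k q A) M)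
    (hvL : v ∈ L) (hvM : v ∈ M) : ∃ a : k, a ≠ 0 ∧ ∀ i, (a • v) i ^ q ^ 2 = (a • v) i := by
  have hq0 : q ≠ 0 := by omega
  obtain ⟨x, hxL, hxM⟩ : ∃ x ∈ L, x ∉ M := by
    by_contra! h
    exact hLM (Submodule.eq_of_le_of_finrank_eq h (hL.1.trans hM.1.symm))
  obtain ⟨y, hyM, hy⟩ : ∃ y ∈ M, ∀ a : k, a • v ≠ y := by
    by_contra! h
    have h1 : M ≤ Submodule.span k {v} := fun y hy => by
      obtain ⟨a, ha⟩ := h y hy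
      exact Submodule.mem_span_singleton.2 ⟨a, ha⟩
    have h2 := Submodule.finrank_mono h1
    rw [finrank_span_singleton hv, hM.1] at h2
    omega
  have hind : LinearIndependent k ![x, y, v] := by
    refine linInd_three (linInd_two hv hy) fun h => hxM ?_
    have : Submodule.span k {y, v} ≤ M := by
      rw [Submodule.span_le]
      rintro w (rfl | rfl) <;> assumption
    exact this h
  have pL : ∀ {a b}, a ∈ L → b ∈ L → sesq q A a b = 0 := fun ha hb =>
    sesq_polar hq hadd (L := L) (fun z hz => hL.2 hz) ha hb
  have pM : ∀ {a b}, a ∈ M → b ∈ M → sesq q A a b = 0 := fun ha hb =>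
    sesq_polar hq hadd (L := M) (fun z hz => hM.2 hz) ha hb
  have hφ : ∀ w, sesq q A v w = 0 → sesq q A w (fun i => v i ^ q ^ 2) = 0 := by
    intro w hw
    rw [← sesq_herm hq0 hadd hHerm, hw, zero_pow hq0]
  obtain ⟨l, hl⟩ : ∃ l : k, l • v = fun i => v i ^ q ^ 2 := by
    by_contra! h
    have := orth_card hq0 hadd hA hind (linInd_two hv h) (by
      intro i j
      fin_cases i <;> fin_cases j
      · exact hφ _ (pL hvL hxL)
      · exact pL hxL hvL
      · exact hφ _ (pM hvM hyM)
      · exact pM hyM hvM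
      · exact hφ _ (pM hvM hvM)
      · exact pM hvM hvM)
    omega
  have hl0 : l ≠ 0 := by
    rintro rfl
    apply hv
    funext i
    have := congrFun hl i
    simp only [zero_smul, Pi.zero_apply] at this
    exact pow_eq_zero_iff (by positivity) |>.1 this.symm
  have hqq : 0 < q ^ 2 - 1 := by
    have : 2 * 2 ≤ q ^ 2 := by nlinarith
    omega
  obtain ⟨a, ha⟩ := IsAlgClosed.exists_pow_nat_eq l⁻¹ hqq
  have ha' : a ^ q ^ 2 * l = a := by
    have : q ^ 2 = (q ^ 2 - 1) + 1 := by omega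
    rw [this, pow_succ, ha]
    field_simp
  refine ⟨a, ?_, fun i => ?_⟩
  · rintro rfl
    rw [zero_pow hqq.ne'] at ha
    exact inv_ne_zero hl0 ha.symm
  · have := congrFun hl i
    simp only [Pi.smul_apply, smul_eq_mul] at this ⊢
    rw [mul_pow, ← this, ← mul_assoc, ha']

theorem rational_to_star [IsAlgClosed k] {q : ℕ} (hq : 2 ≤ q) (hqk : (q : k) = 0)
    (hadd : ∀ a b : k, (a + b) ^ q = a ^ q + b ^ q)
    {A : Matrix (Fin 4) (Fin 4) k} (hA : IsUnit A)
    (hHerm : Matrix.transpose (A.map fun a => a ^ q) = A)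
    {v : Fin 4 → k} (hv : v ≠ 0) (hvv : sesq q A v v = 0) (hrat : ∀ i, v i ^ q ^ 2 = v i) :
    ∃ S : Set (Submodule k (Fin 4 → k)), S.ncard = q + 1 ∧
      ∀ L ∈ S, IsLineOn (extremalCone k q A) L ∧ v ∈ L := by
  have hq0 : q ≠ 0 := by omega
  have hsymm : ∀ w, sesq q A v w = 0 → sesq q A w v = 0 := by
    intro w hw
    have := sesq_herm hq0 hadd hHerm v w
    rw [hw, zero_pow hq0, funext hrat] at this
    exact this.symm
  set K := LinearMap.ker (sesq q A v) with hK
  have hKd : 3 ≤ finrank k K := by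
    have h1 := LinearMap.finrank_range_add_finrank_ker (sesq q A v)
    have h2 := Submodule.finrank_le (LinearMap.range (sesq q A v))
    rw [Module.finrank_self] at h2
    rw [Module.finrank_fin_fun, ← hK] at h1
    omega
  obtain ⟨y, hyK, hyy⟩ : ∃ y ∈ K, sesq q A y y ≠ 0 := by
    by_contra! h
    obtain ⟨f, hf⟩ := exists_linearIndependent_of_le_finrank hKd
    have hf' : LinearIndependent k (fun i => (f i : Fin 4 → k)) :=
      hf.map' K.subtype K.ker_subtype
    have := orth_card hq0 hadd hA hf' hf' (fun i j =>
      sesq_polar hq hadd h (f i).2 (f j).2)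
    omega
  have hvy : sesq q A v y = 0 := hyK
  have hyv := hsymm y hvy
  have hy : ∀ a : k, a • v ≠ y := by
    rintro a rfl
    apply hyy
    rw [map_smul, hyv, smul_zero]
  have hindyv := linInd_two hv hy
  obtain ⟨x, hxK, hx⟩ : ∃ x ∈ K, x ∉ Submodule.span k {y, v} := by
    by_contra! h
    have h1 := Submodule.finrank_mono (show K ≤ Submodule.span k {y, v} from h)
    have h2 := finrank_span_eq_card hindyv
    have h3 : Set.range ![y, v] = {y, v} := by simp [Set.pair_comm]
    rw [h3, Fintype.card_fin] at h2
    omega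
  have hvx : sesq q A v x = 0 := hxK
  have hxv := hsymm x hvx
  have hind := linInd_three hindyv hx
  have hind' : ∀ a b c : k, a • x + b • y + c • v = 0 → a = 0 ∧ b = 0 ∧ c = 0 := by
    intro a b c h
    have := Fintype.linearIndependent_iff.1 hind ![a, b, c] (by simpa [Fin.sum_univ_three] using h)
    exact ⟨this 0, this 1, this 2⟩
  have hform : ∀ t : k, sesq q A (x + t • y) (x + t • y) =
      sesq q A x x + t * sesq q A x y + t ^ q * sesq q A y x + t ^ (q + 1) * sesq q A y y := by
    intro t
    rw [sesq_add hadd, sesq_smul]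
    simp only [map_add, map_smul, LinearMap.add_apply, LinearMap.smul_apply, smul_eq_mul]
    ring
  have huv : ∀ t : k, sesq q A (x + t • y) v = 0 := by
    intro t
    rw [sesq_add hadd, sesq_smul]
    simp [hxv, hyv]
  have hvu : ∀ t : k, sesq q A v (x + t • y) = 0 := by
    intro t
    simp [hvx, hvy]
  have hune : ∀ t a : k, a • v ≠ x + t • y := by
    intro t a h
    have := (hind' 1 t (-a) (by rw [neg_smul, h, one_smul]; abel)).1
    exact one_ne_zero this
  have hcount := roots_ncard hq hqk (sesq q A x x) (sesq q A x y) (sesq q A y x) (sesq q A y y) hyy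
    (by
      intro t ht hb
      have huy : sesq q A (x + t • y) y = 0 := by
        rw [sesq_add hadd, sesq_smul]
        simpa using hb
      have hux : sesq q A (x + t • y) x = 0 := by
        have := hform t
        rw [ht, map_add, map_smul, huy, smul_zero, add_zero] at this
        exact this
      have := orth_card hq0 hadd hA (linInd_two hv (hune t)) hind (by
        intro i j
        fin_cases i <;> fin_cases j
        · exact hux
        · exact huy
        · exact huv t
        · exact hvx
        · exact hvy
        · exact hvv)
      omega)
  refine ⟨Set.image (fun t : k => Submodule.span k {x + t • y, v})
    {t : k | sesq q A x x + t * sesq q A x y + t ^ q * sesq q A y x +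
      t ^ (q + 1) * sesq q A y y = 0}, ?_, ?_⟩
  · rw [Set.InjOn.ncard_image, hcount]
    intro s _ t _ hst
    simp only at hst
    have : x + s • y ∈ Submodule.span k {x + t • y, v} := by
      rw [← hst]; exact Submodule.subset_span (by simp)
    obtain ⟨a, b, hab⟩ := Submodule.mem_span_pair.1 this
    obtain ⟨h1, h2, -⟩ := hind' (a - 1) (a * t - s) b (by
      have h0 : a • (x + t • y) + b • v - (x + s • y) = 0 := sub_eq_zero.2 hab
      rw [← h0]
      module)
    have ha : a = 1 := sub_eq_zero.1 h1
    rw [ha, one_mul] at h2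
    exact (sub_eq_zero.1 h2).symm
  · rintro _ ⟨t, ht, rfl⟩
    refine ⟨⟨?_, ?_⟩, Submodule.subset_span (by simp)⟩
    · have h2 := finrank_span_eq_card (linInd_two hv (hune t))
      have h3 : Set.range ![x + t • y, v] = {x + t • y, v} := by simp [Set.pair_comm]
      rw [h3, Fintype.card_fin] at h2
      exact h2
    · intro w hw
      obtain ⟨a, b, rfl⟩ := Submodule.mem_span_pair.1 hw
      have huu := (hform t).trans ht
      have e1 := huv t
      have e2 := hvu t
      change sesq q A _ _ = 0
      generalize x + t • y = u at huu e1 e2 ⊢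
      rw [sesq_add hadd, sesq_smul, sesq_smul]
      simp only [map_add, map_smul, LinearMap.add_apply, LinearMap.smul_apply, huu, e1, e2, hvv,
        smul_zero, add_zero]

end Helpers

/-- Let `X` be the smooth extremal surface of degree `q+1`
cut out by a full-rank Frobenius form whose matrix `A` is Hermitian, i.e.
`(A^{[q]})ᵀ = A` (so every entry of `A` lies in `F_{q²}`).  Then a point of
`X` is a star point of `X` iff it is an `F_{q²}`-point, i.e. it admits a
homogeneous coordinate representative all of whose coordinates lie in
`F_{q²} = {x : k | x^{q²} = x}`. -/
theorem hermitian_star_points_eq_rational_points {k : Type*} [Field k] [IsAlgClosed k]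
    (p e q : ℕ) (hp : p.Prime) (hchar : CharP k p) (he : 1 ≤ e) (hq : q = p ^ e)
    (A : Matrix (Fin 4) (Fin 4) k) (hA : IsUnit A)
    (hHerm : Matrix.transpose (A.map fun a => a ^ q) = A)
    (c : Submodule k (Fin 4 → k)) (hc : IsPoint c)
    (hcX : (c : Set (Fin 4 → k)) ⊆ extremalCone k q A) :
    IsStarPoint q (extremalCone k q A) c ↔
      ∃ v ∈ c, v ≠ 0 ∧ ∀ i, v i ^ q ^ 2 = v i := by
  have : Fact p.Prime := ⟨hp⟩
  have := hchar
  have hadd : ∀ a b : k, (a + b) ^ q = a ^ q + b ^ q := by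
    intro a b
    rw [hq]
    exact add_pow_char_pow a b p e
  have hqk : (q : k) = 0 := by
    rw [hq, Nat.cast_pow, CharP.cast_eq_zero, zero_pow (by omega)]
  have hq2 : 2 ≤ q := by
    rw [hq]
    exact hp.two_le.trans (Nat.le_self_pow (by omega) p)
  constructor
  · rintro ⟨S, -, hcard, hS⟩
    have hfin : S.Finite := Set.finite_of_ncard_ne_zero (by omega)
    obtain ⟨L, M, hL, hM, hLM⟩ := (Set.one_lt_ncard_iff hfin).1 (by omega)
    have hcb : c ≠ ⊥ := by
      rintro rfl
      simp [IsPoint] at hc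
    obtain ⟨v, hvc, hv⟩ := Submodule.exists_mem_ne_zero_of_ne_bot hcb
    obtain ⟨a, ha, hav⟩ := star_to_rational hq2 hadd hA hHerm hv hLM (hS L hL).1 (hS M hM).1
      ((hS L hL).2 hvc) ((hS M hM).2 hvc)
    exact ⟨a • v, c.smul_mem a hvc, smul_ne_zero ha hv, hav⟩
  · rintro ⟨v, hvc, hv, hrat⟩
    obtain ⟨S, hcard, hS⟩ := rational_to_star hq2 hqk hadd hA hHerm hv (hcX hvc) hrat
    have hcv : Submodule.span k {v} = c := by
      refine Submodule.eq_of_le_of_finrank_eq ?_ ?_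
      · rw [Submodule.span_le]
        simpa using hvc
      · rw [finrank_span_singleton hv]
        exact hc.symm
    refine ⟨S, hc, hcard, fun L hL => ⟨(hS L hL).1, ?_⟩⟩
    rw [← hcv, Submodule.span_le]
    simpa using (hS L hL).2
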